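/- For every integer n ≥ 2, n² · √3 · arctan( √3/(2n − 1) ) = (3/2) · ∑_{k=0}^∞ (1/(−n³)^k) · ( n/(3k+1) + 1/(3k+2) ). -/

import Mathlib

/-!
Taking imaginary parts in `-log (1 - p * exp (i x)) = ∑ p ^ k * exp (i k x) / k` gives the
arctangent generator. At `x = π / m` the sines are antiperiodic in `k` with antiperiod `m`, so the
terms collect into blocks of length `m` with common ratio `-p ^ m`: this is a BBP-type formula.
For `m = 3` the values of `sin` are `0, √3 / 2, √3 / 2`, and one takes `p = 1 / n`.
-/

open Real

theorem hasSum_sum_fin_mul_add {α : Type*} [AddCommMonoid α] [TopologicalSpace α]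
    [ContinuousAdd α] [RegularSpace α] {f : ℕ → α} {a : α} (m : ℕ) [NeZero m] (hf : HasSum f a) :
    HasSum (fun k ↦ ∑ j : Fin m, f (m * k + j)) a :=
  ((Nat.divModEquiv m).symm.hasSum_iff.2 hf).prod_fiberwise fun k ↦ by
    simpa [Nat.divModEquiv, mul_comm, add_comm] using hasSum_fintype fun j : Fin m ↦ f (m * k + j)

theorem im_neg_log_one_sub {z : ℂ} (hz : z.re < 1) :
    (-Complex.log (1 - z)).im = arctan (z.im / (1 - z.re)) := by
  have hre : 0 < (1 - z).re := by simpa using hz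
  have harg := abs_lt.1 (Complex.abs_arg_lt_pi_div_two_iff.2 (Or.inl hre))
  calc (-Complex.log (1 - z)).im
      = -arctan (tan (Complex.arg (1 - z))) := by
        rw [Complex.neg_im, Complex.log_im, arctan_tan harg.1 harg.2]
    _ = arctan (z.im / (1 - z.re)) := by
        simp [Complex.tan_arg, ← arctan_neg, neg_div]

-- The term `k = 0` is `0 / 0 = 0`.
theorem hasSum_arctan_mul_sin_div_one_sub_mul_cos {p : ℝ} (hp : |p| < 1) (x : ℝ) :
    HasSum (fun k : ℕ ↦ p ^ k * sin (k * x) / k) (arctan (p * sin x / (1 - p * cos x))) := by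
  set z : ℂ := p * Complex.exp (x * Complex.I) with hz
  have hre : z.re = p * cos x := by simp [hz, Complex.exp_ofReal_mul_I_re]
  have him : z.im = p * sin x := by simp [hz, Complex.exp_ofReal_mul_I_im]
  have hnorm : ‖z‖ < 1 := by simpa [hz, Complex.norm_exp_ofReal_mul_I] using hp
  have hterm (k : ℕ) : (z ^ k / k).im = p ^ k * sin (k * x) / k := by
    rw [hz, mul_pow, ← Complex.exp_nat_mul, ← mul_assoc, ← Complex.ofReal_natCast,
      ← Complex.ofReal_mul, ← Complex.ofReal_pow, Complex.div_ofReal_im, Complex.im_ofReal_mul,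
      Complex.exp_ofReal_mul_I_im]
  have hlog := Complex.hasSum_im (Complex.hasSum_taylorSeries_neg_log hnorm)
  rw [im_neg_log_one_sub ((Complex.re_le_norm z).trans_lt hnorm), hre, him] at hlog
  simpa only [hterm] using hlog

theorem sin_natCast_mul_add_mul_pi_div (m : ℕ) [NeZero m] (k j : ℕ) :
    sin ((m * k + j : ℕ) * (π / m)) = (-1) ^ k * sin (j * (π / m)) := by
  have hm : (m : ℝ) ≠ 0 := NeZero.ne _
  rw [← sin_add_nat_mul_pi]
  congr 1
  push_cast
  field_simp
  ring

theorem hasSum_arctan_mul_sin_div_one_sub_mul_cos_pi_div {p : ℝ} (hp : |p| < 1) (m : ℕ) [NeZero m] :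
    HasSum (fun k : ℕ ↦ (-p ^ m) ^ k * ∑ j : Fin m, p ^ (j : ℕ) * sin (j * (π / m)) / (m * k + j))
      (arctan (p * sin (π / m) / (1 - p * cos (π / m)))) := by
  have hblocks :=
    hasSum_sum_fin_mul_add m (hasSum_arctan_mul_sin_div_one_sub_mul_cos hp (π / m))
  refine hblocks.congr_fun fun k ↦ ?_
  rw [Finset.mul_sum]
  refine Finset.sum_congr rfl fun j _ ↦ ?_
  rw [sin_natCast_mul_add_mul_pi_div, neg_pow, pow_add, pow_mul]
  push_cast
  ring

theorem hasSum_arctan_sqrt_three_mul_div_two_sub {p : ℝ} (hp : |p| < 1) :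
    HasSum (fun k : ℕ ↦ (-p ^ 3) ^ k * (√3 / 2 * (p / (3 * k + 1) + p ^ 2 / (3 * k + 2))))
      (arctan (√3 * p / (2 - p))) := by
  have hsin : sin (2 * (π / 3)) = √3 / 2 := by
    rw [sin_two_mul, sin_pi_div_three, cos_pi_div_three]
    ring
  have harg : p * sin (π / 3) / (1 - p * cos (π / 3)) = √3 * p / (2 - p) := by
    rw [sin_pi_div_three, cos_pi_div_three, ← mul_div_mul_left _ _ (two_ne_zero' ℝ)]
    ring_nf
  have hseries := hasSum_arctan_mul_sin_div_one_sub_mul_cos_pi_div hp 3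
  rw [Nat.cast_ofNat, harg] at hseries
  refine hseries.congr_fun fun k ↦ ?_
  simp only [Fin.sum_univ_three, Fin.val_zero, Fin.val_one, Fin.val_two, Nat.cast_zero,
    Nat.cast_one, Nat.cast_ofNat, zero_mul, one_mul, sin_zero, sin_pi_div_three, hsin]
  ring

theorem stmt_5_general {t : ℝ} (ht : 1 < |t|) :
    HasSum (fun k : ℕ ↦ 1 / (-t ^ 3) ^ k * (t / (3 * k + 1) + 1 / (3 * k + 2)))
      (2 / 3 * (t ^ 2 * √3 * arctan (√3 / (2 * t - 1)))) := by
  have ht₀ : t ≠ 0 := abs_pos.1 (one_pos.trans ht)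
  have hinv : |t⁻¹| < 1 := by
    rw [abs_inv]
    exact inv_lt_one_of_one_lt₀ ht
  have harg : √3 * t⁻¹ / (2 - t⁻¹) = √3 / (2 * t - 1) := by
    rw [← mul_div_mul_right _ _ ht₀, inv_mul_cancel_right₀ ht₀, sub_mul, inv_mul_cancel₀ ht₀]
  have hseries := (hasSum_arctan_sqrt_three_mul_div_two_sub hinv).mul_left (2 / 3 * (t ^ 2 * √3))
  rw [harg, mul_assoc (2 / 3)] at hseries
  refine hseries.congr_fun fun k ↦ ?_
  have hpow : (-t⁻¹ ^ 3) ^ k = 1 / (-t ^ 3) ^ k := by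
    rw [inv_pow, ← inv_neg, inv_pow, one_div]
  have hsq : √3 ^ 2 = 3 := sq_sqrt (by norm_num)
  rw [hpow]
  field_simp
  rw [hsq]
  ring

theorem stmt_5 (n : ℕ) (hn : 2 ≤ n) :
    (n : ℝ) ^ 2 * Real.sqrt 3 * Real.arctan (Real.sqrt 3 / (2 * (n : ℝ) - 1)) =
      (3 / 2) * ∑' k : ℕ, (1 / (-(n : ℝ) ^ 3) ^ k) *
        ((n : ℝ) / (3 * (k : ℝ) + 1) + 1 / (3 * (k : ℝ) + 2)) := by
  rw [(stmt_5_general (t := n) (by rw [Nat.abs_cast]; exact_mod_cast hn)).tsum_eq]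
  ring
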